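/- Let d ≥ 1 and n ≥ d+1. For every nontrivial (d-1)-cycle Z on [n] over F_2, there exists a (d-1)-cycle Z' on [n] such that Z' is the boundary of a d-hypertree on [n] and |Z ⊕ Z'| ≤ (d+1)·C(n-1,d-2) (with the convention C(m,k) = 0 for k < 0). -/

import Mathlib

open Finset symmDiff

/-- The vertex set `[n] = {1, …, n}`. -/
def rng (n : ℕ) : Finset ℕ := Finset.Icc 1 n

/-- The set of `d`-simplices (i.e. `(d+1)`-element subsets) on the vertex set `V`. -/
def simplices (V : Finset ℕ) (d : ℕ) : Finset (Finset ℕ) :=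
  V.powerset.filter fun σ => σ.card = d + 1

/-- The mod-2 boundary of a set `X` of simplices: the set of faces `τ` of codimension one
(`|τ| + 1 = |σ|`) contained in an odd number of members of `X`. -/
def bd (X : Finset (Finset ℕ)) : Finset (Finset ℕ) :=
  (X.biUnion fun σ => σ.powerset).filter
    fun τ => Odd (X.filter fun σ => τ ⊆ σ ∧ τ.card + 1 = σ.card).card

/-- A set of simplices is acyclic (a forest) over `F_2` if no nonempty subset has
empty boundary. -/
def IsAcyclic (F : Finset (Finset ℕ)) : Prop :=
  ∀ Y ⊆ F, Y ≠ ∅ → bd Y ≠ ∅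

/-- A `d`-hypertree on `V`: a maximal acyclic set of `d`-simplices on `V`. -/
def IsHypertreeOn (V : Finset ℕ) (d : ℕ) (T : Finset (Finset ℕ)) : Prop :=
  T ⊆ simplices V d ∧ IsAcyclic T ∧
    ∀ G, T ⊆ G → G ⊆ simplices V d → IsAcyclic G → G = T

/-- A simple cycle over `F_2`: a nonempty set with empty boundary, no nonempty proper
subset of which has empty boundary. -/
def IsSimpleCycle (Z : Finset (Finset ℕ)) : Prop :=
  Z ≠ ∅ ∧ bd Z = ∅ ∧ ∀ Y ⊂ Z, Y ≠ ∅ → bd Y ≠ ∅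

/-- Collapsibility: `X` can be reduced to `∅` by repeatedly removing a simplex `σ ∈ X`
containing a codimension-one face contained in no other current member of `X`. -/
inductive Collapsible : Finset (Finset ℕ) → Prop
  | empty : Collapsible ∅
  | step (X : Finset (Finset ℕ)) (σ τ : Finset ℕ) (hσ : σ ∈ X) (hτ : τ ⊆ σ)
      (hcard : τ.card + 1 = σ.card) (huniq : ∀ σ' ∈ X, τ ⊆ σ' → σ' = σ)
      (h : Collapsible (X.erase σ)) : Collapsible X

/-- The cone over `X` with apex `v`. -/
def cone (v : ℕ) (X : Finset (Finset ℕ)) : Finset (Finset ℕ) :=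
  X.image (insert v)

/-- The link of the vertex `v` in `X`. -/
def link (v : ℕ) (X : Finset (Finset ℕ)) : Finset (Finset ℕ) :=
  (X.filter fun σ => v ∈ σ).image fun σ => σ.erase v

/-- `fill Z T`: the subset `F ⊆ T` with `∂F = Z` (when it exists; it is unique when `T`
is a hypertree and `Z` a cycle). -/
noncomputable def fill (Z T : Finset (Finset ℕ)) : Finset (Finset ℕ) :=
  if h : ∃ F, F ⊆ T ∧ bd F = Z then h.choose else ∅

/-- The average filling-volume `μ(T)` of a `d`-hypertree `T` on `[n]`. -/
noncomputable def fillVolAvg (n d : ℕ) (T : Finset (Finset ℕ)) : ℝ :=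
  (∑ σ ∈ simplices (rng n) d, ((fill (bd {σ}) T).card : ℝ)) / (n.choose (d + 1) : ℝ)

open Classical in
/-- The cut of `τ` in `T`: the set of `d`-simplices `σ` on `[n]` such that
`T ⊕ {τ} ⊕ {σ}` is a `d`-hypertree on `[n]`. -/
noncomputable def cut (n d : ℕ) (τ : Finset ℕ) (T : Finset (Finset ℕ)) : Finset (Finset ℕ) :=
  (simplices (rng n) d).filter fun σ => IsHypertreeOn (rng n) d ((T ∆ {τ}) ∆ {σ})

/-!
Fix a vertex `v` of a simplex of `Z`. The link of `v` in `Z` is a `(d-2)`-cycle on the remaining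
vertices; if `W` fills it, then the antistar of `v` in `Z` plus `W` is a `(d-1)`-cycle on the
remaining vertices, and if `W'` fills that one, the cone over `W` plus `W'` fills `Z`. The same
operation glues a `(d-1)`-hypertree and a `d`-hypertree into a `d`-hypertree, so if `W` and `W'`
differ from hypertrees by `k` and `k'` simplices, the new filling differs from one by `k + k'`.
By Pascal's rule the recursion yields fillings at distance at most `C(n-1, d-2)` from hypertrees,
and each simplex of the difference contributes at most `d + 1` faces to `Z ⊕ ∂T`.

The recursion breaks when the second cycle is empty. Therefore one proves more: on at least `d + 3`
vertices a nonempty cycle has two such fillings, so `W` can be chosen to differ from the antistar.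
-/

section Boundary

variable {σ τ : Finset ℕ} {X Y : Finset (Finset ℕ)}

theorem insert_eq_symmDiff (h : σ ∉ X) : insert σ X = {σ} ∆ X := by
  rw [symmDiff_eq_union (disjoint_singleton_left.2 h), insert_eq]

theorem card_symmDiff_le (X Y : Finset (Finset ℕ)) : #(X ∆ Y) ≤ #X + #Y :=
  (card_le_card symmDiff_subset_union).trans (card_union_le X Y)

theorem odd_card_symmDiff : Odd #(X ∆ Y) ↔ ¬(Odd #X ↔ Odd #Y) := by
  have hXY : #(X ∆ Y) = #(X \ Y) + #(Y \ X) := card_union_of_disjoint disjoint_sdiff_sdiff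
  have hX := card_sdiff_add_card_inter X Y
  have hY := card_sdiff_add_card_inter Y X
  rw [inter_comm] at hY
  simp only [Nat.odd_iff]
  omega

theorem mem_bd : τ ∈ bd X ↔ Odd #{σ ∈ X | τ ⊆ σ ∧ #τ + 1 = #σ} := by
  simp only [bd, mem_filter, mem_biUnion, mem_powerset, and_iff_right_iff_imp]
  intro hodd
  obtain ⟨σ, hσ⟩ := card_pos.1 hodd.pos
  exact ⟨σ, (mem_filter.1 hσ).1, (mem_filter.1 hσ).2.1⟩

theorem mem_bd_singleton : τ ∈ bd {σ} ↔ τ ⊆ σ ∧ #τ + 1 = #σ := by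
  rw [mem_bd, filter_singleton]
  split_ifs with h <;> simp [h]

theorem bd_singleton {k : ℕ} (hσ : #σ = k + 1) : bd {σ} = powersetCard k σ := by
  ext τ
  simp [mem_bd_singleton, mem_powersetCard, hσ]

theorem bd_symmDiff (X Y : Finset (Finset ℕ)) : bd (X ∆ Y) = bd X ∆ bd Y := by
  ext τ
  have hfilter : {σ ∈ X ∆ Y | τ ⊆ σ ∧ #τ + 1 = #σ} =
      {σ ∈ X | τ ⊆ σ ∧ #τ + 1 = #σ} ∆ {σ ∈ Y | τ ⊆ σ ∧ #τ + 1 = #σ} := by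
    ext σ
    simp only [mem_filter, mem_symmDiff]
    tauto
  rw [mem_symmDiff, mem_bd, mem_bd, mem_bd, hfilter, odd_card_symmDiff]
  tauto

theorem exists_mem_of_mem_bd (h : τ ∈ bd X) : ∃ σ ∈ X, τ ∈ bd {σ} := by
  obtain ⟨σ, hσ⟩ := card_pos.1 (mem_bd.1 h).pos
  exact ⟨σ, (mem_filter.1 hσ).1, mem_bd_singleton.2 (mem_filter.1 hσ).2⟩

theorem card_bd_le {k : ℕ} (hX : ∀ σ ∈ X, #σ = k + 1) : #(bd X) ≤ (k + 1) * #X := by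
  have hsub : bd X ⊆ X.biUnion fun σ => bd {σ} := fun τ hτ =>
    mem_biUnion.2 (exists_mem_of_mem_bd hτ)
  rw [mul_comm]
  refine (card_le_card hsub).trans (card_biUnion_le_card_mul _ _ _ fun σ hσ => ?_)
  simp [bd_singleton (hX σ hσ), hX σ hσ]

end Boundary

section ConeLinkAntistar

/-- No simplex of `X` contains the vertex `v`, so that `cone v` is injective on `X`
and raises dimensions by one. -/
def Avoids (v : ℕ) (X : Finset (Finset ℕ)) : Prop := ∀ σ ∈ X, v ∉ σ

/-- The antistar of the vertex `v` in `X`: the simplices of `X` not containing `v`. -/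
def antistar (v : ℕ) (X : Finset (Finset ℕ)) : Finset (Finset ℕ) := {σ ∈ X | v ∉ σ}

variable {v : ℕ} {σ τ : Finset ℕ} {X Y Z : Finset (Finset ℕ)}

theorem avoids_singleton : Avoids v {σ} ↔ v ∉ σ := by simp [Avoids]

theorem avoids_symmDiff (hX : Avoids v X) (hY : Avoids v Y) : Avoids v (X ∆ Y) := fun σ hσ =>
  (mem_union.1 (symmDiff_subset_union hσ)).elim (hX σ) (hY σ)

theorem avoids_bd (hX : Avoids v X) : Avoids v (bd X) := by
  intro τ hτ hv
  obtain ⟨σ, hσ, hτσ⟩ := exists_mem_of_mem_bd hτ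
  exact hX σ hσ ((mem_bd_singleton.1 hτσ).1 hv)

theorem mem_cone (hX : Avoids v X) : τ ∈ cone v X ↔ v ∈ τ ∧ τ.erase v ∈ X := by
  simp only [cone, mem_image]
  constructor
  · rintro ⟨σ, hσ, rfl⟩
    exact ⟨mem_insert_self v σ, by rwa [erase_insert (hX σ hσ)]⟩
  · rintro ⟨hv, hτ⟩
    exact ⟨_, hτ, insert_erase hv⟩

theorem mem_link : τ ∈ link v X ↔ v ∉ τ ∧ insert v τ ∈ X := by
  simp only [link, mem_image, mem_filter]
  constructor
  · rintro ⟨σ, ⟨hσ, hv⟩, rfl⟩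
    exact ⟨notMem_erase v σ, by rwa [insert_erase hv]⟩
  · rintro ⟨hv, hτ⟩
    exact ⟨_, ⟨hτ, mem_insert_self v τ⟩, erase_insert hv⟩

theorem mem_antistar : τ ∈ antistar v X ↔ τ ∈ X ∧ v ∉ τ := mem_filter

theorem avoids_link (v : ℕ) (X : Finset (Finset ℕ)) : Avoids v (link v X) := fun _ hσ =>
  (mem_link.1 hσ).1

theorem avoids_antistar (v : ℕ) (X : Finset (Finset ℕ)) : Avoids v (antistar v X) := fun _ hσ =>
  (mem_antistar.1 hσ).2

theorem cone_empty (v : ℕ) : cone v ∅ = ∅ := rfl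

theorem cone_singleton (v : ℕ) (σ : Finset ℕ) : cone v {σ} = {insert v σ} := image_singleton ..

theorem cone_symmDiff (hX : Avoids v X) (hY : Avoids v Y) :
    cone v (X ∆ Y) = cone v X ∆ cone v Y := by
  ext τ
  rw [mem_cone (avoids_symmDiff hX hY), mem_symmDiff, mem_symmDiff, mem_cone hX, mem_cone hY]
  tauto

theorem cone_link_symmDiff_antistar (v : ℕ) (X : Finset (Finset ℕ)) :
    cone v (link v X) ∆ antistar v X = X := by
  ext τ
  rw [mem_symmDiff, mem_cone (avoids_link v X), mem_link, mem_antistar]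
  by_cases hv : v ∈ τ <;> simp [hv, insert_erase]

theorem link_cone_symmDiff (hX : Avoids v X) (hY : Avoids v Y) : link v (cone v X ∆ Y) = X := by
  ext τ
  have hXτ := hX τ
  have hYτ := hY (insert v τ)
  by_cases hv : v ∈ τ <;> simp_all [mem_link, mem_symmDiff, mem_cone hX]

theorem antistar_cone_symmDiff (hX : Avoids v X) (hY : Avoids v Y) :
    antistar v (cone v X ∆ Y) = Y := by
  ext τ
  have hYτ := hY τ
  rw [mem_antistar, mem_symmDiff, mem_cone hX]
  tauto

theorem bd_singleton_insert (hv : v ∉ σ) : bd {insert v σ} = {σ} ∆ cone v (bd {σ}) := by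
  ext τ
  rw [mem_symmDiff, mem_cone (avoids_bd (avoids_singleton.2 hv)), mem_singleton, mem_bd_singleton,
    mem_bd_singleton, card_insert_of_notMem hv, add_left_inj]
  by_cases hvτ : v ∈ τ
  · have hne : τ ≠ σ := fun h => hv (h ▸ hvτ)
    simp only [hvτ, hne, subset_insert_iff, card_erase_add_one, false_and, true_and,
      not_false_eq_true, and_true, false_or]
  · have htop : τ ⊆ σ ∧ #τ = #σ ↔ τ = σ :=
      ⟨fun h => eq_of_subset_of_card_le h.1 h.2.ge, fun h => by simp [h]⟩
    simp [hvτ, subset_insert_iff_of_notMem, htop]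

theorem bd_cone (hX : Avoids v X) : bd (cone v X) = X ∆ cone v (bd X) := by
  induction X using Finset.induction_on with
  | empty => rfl
  | insert σ X hσ ih =>
    have hσv : Avoids v {σ} := avoids_singleton.2 (hX σ (mem_insert_self σ X))
    have hXv : Avoids v X := fun τ hτ => hX τ (mem_insert_of_mem hτ)
    rw [insert_eq_symmDiff hσ, cone_symmDiff hσv hXv, bd_symmDiff, bd_symmDiff, ih hXv,
      cone_symmDiff (avoids_bd hσv) (avoids_bd hXv), cone_singleton,
      bd_singleton_insert (avoids_singleton.1 hσv), symmDiff_symmDiff_symmDiff_comm]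

theorem bd_cone_symmDiff (hX : Avoids v X) :
    bd (cone v X ∆ Y) = cone v (bd X) ∆ (X ∆ bd Y) := by
  rw [bd_symmDiff, bd_cone hX, symmDiff_comm X, symmDiff_assoc]

theorem link_bd (v : ℕ) (X : Finset (Finset ℕ)) : link v (bd X) = bd (link v X) := by
  have hL := avoids_link v X
  conv_lhs => rw [← cone_link_symmDiff_antistar v X, bd_cone_symmDiff hL]
  exact link_cone_symmDiff (avoids_bd hL) (avoids_symmDiff hL (avoids_bd (avoids_antistar v X)))

theorem antistar_bd (v : ℕ) (X : Finset (Finset ℕ)) :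
    antistar v (bd X) = link v X ∆ bd (antistar v X) := by
  have hL := avoids_link v X
  conv_lhs => rw [← cone_link_symmDiff_antistar v X, bd_cone_symmDiff hL]
  exact antistar_cone_symmDiff (avoids_bd hL)
    (avoids_symmDiff hL (avoids_bd (avoids_antistar v X)))

theorem bd_bd (X : Finset (Finset ℕ)) : bd (bd X) = ∅ := by
  have bd_bd_singleton (σ : Finset ℕ) : bd (bd {σ}) = ∅ := by
    induction σ using Finset.induction_on with
    | empty => rfl
    | insert v σ hv ih =>
      rw [bd_singleton_insert hv, bd_symmDiff, bd_cone (avoids_bd (avoids_singleton.2 hv)), ih,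
        cone_empty, ← bot_eq_empty, symmDiff_bot, symmDiff_self]
  induction X using Finset.induction_on with
  | empty => rfl
  | insert σ X hσ ih =>
    rw [insert_eq_symmDiff hσ, bd_symmDiff, bd_symmDiff, bd_bd_singleton, ih, symmDiff_eq_empty]

theorem bd_link (hZ : bd Z = ∅) (v : ℕ) : bd (link v Z) = ∅ := by
  rw [← link_bd, hZ]
  rfl

theorem bd_antistar (hZ : bd Z = ∅) (v : ℕ) : bd (antistar v Z) = link v Z := by
  have h : link v Z ∆ bd (antistar v Z) = ∅ := by
    rw [← antistar_bd, hZ]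
    rfl
  exact (symmDiff_eq_empty.1 h).symm

theorem bd_cone_antistar (hZ : bd Z = ∅) (v : ℕ) : bd (cone v (antistar v Z)) = Z := by
  rw [bd_cone (avoids_antistar v Z), bd_antistar hZ, symmDiff_comm, cone_link_symmDiff_antistar]

end ConeLinkAntistar

section Uniform

variable {v k : ℕ} {V : Finset ℕ} {X Y : Finset (Finset ℕ)}

theorem avoids_of_subset_powersetCard (hv : v ∉ V) (hX : X ⊆ powersetCard k V) : Avoids v X :=
  fun _ hσ hvσ => hv ((mem_powersetCard.1 (hX hσ)).1 hvσ)

theorem symmDiff_subset_of_subset {P : Finset (Finset ℕ)} (hX : X ⊆ P) (hY : Y ⊆ P) : X ∆ Y ⊆ P :=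
  symmDiff_subset_union.trans (union_subset hX hY)

theorem bd_subset_powersetCard (hX : X ⊆ powersetCard (k + 1) V) : bd X ⊆ powersetCard k V := by
  intro τ hτ
  obtain ⟨σ, hσ, hτσ⟩ := exists_mem_of_mem_bd hτ
  obtain ⟨hσV, hσk⟩ := mem_powersetCard.1 (hX hσ)
  obtain ⟨hsub, hcard⟩ := mem_bd_singleton.1 hτσ
  exact mem_powersetCard.2 ⟨hsub.trans hσV, by omega⟩

theorem cone_subset_powersetCard (hv : v ∉ V) (hX : X ⊆ powersetCard k V) :
    cone v X ⊆ powersetCard (k + 1) (insert v V) := by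
  rw [powersetCard_succ_insert hv]
  exact (image_subset_image hX).trans subset_union_right

theorem link_subset_powersetCard (hX : X ⊆ powersetCard (k + 1) (insert v V)) :
    link v X ⊆ powersetCard k V := by
  intro τ hτ
  obtain ⟨hv, hτX⟩ := mem_link.1 hτ
  obtain ⟨hsub, hcard⟩ := mem_powersetCard.1 (hX hτX)
  rw [card_insert_of_notMem hv, add_left_inj] at hcard
  exact mem_powersetCard.2 ⟨(insert_subset_insert_iff hv).1 hsub, hcard⟩

theorem antistar_subset_powersetCard (hX : X ⊆ powersetCard k (insert v V)) :
    antistar v X ⊆ powersetCard k V := by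
  intro τ hτ
  obtain ⟨hτX, hv⟩ := mem_antistar.1 hτ
  obtain ⟨hsub, hcard⟩ := mem_powersetCard.1 (hX hτX)
  exact mem_powersetCard.2 ⟨(subset_insert_iff_of_notMem hv).1 hsub, hcard⟩

theorem simplices_eq_powersetCard (V : Finset ℕ) (d : ℕ) :
    simplices V d = powersetCard (d + 1) V := by
  ext σ
  simp [simplices, mem_powersetCard]

end Uniform

section Cycles

/-- `Z` is a cycle on the vertex set `V` all of whose simplices have `k` vertices, i.e. a
`(k-1)`-cycle. Indexing by `k` instead of the dimension gives a meaning to the `(-1)`-cycles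
`∅` and `{∅}`, with which the recursion over links ends. -/
structure IsCycleOn (V : Finset ℕ) (k : ℕ) (Z : Finset (Finset ℕ)) : Prop where
  subset_powersetCard : Z ⊆ powersetCard k V
  bd_eq_empty : bd Z = ∅

variable {v k : ℕ} {V : Finset ℕ} {W X Z : Finset (Finset ℕ)}

theorem isCycleOn_bd (hX : X ⊆ powersetCard (k + 1) V) : IsCycleOn V k (bd X) :=
  ⟨bd_subset_powersetCard hX, bd_bd X⟩

theorem isCycleOn_link (hZ : IsCycleOn (insert v V) (k + 1) Z) : IsCycleOn V k (link v Z) :=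
  ⟨link_subset_powersetCard hZ.subset_powersetCard, bd_link hZ.bd_eq_empty v⟩

theorem isCycleOn_antistar_symmDiff (hZ : IsCycleOn (insert v V) k Z)
    (hW : W ⊆ powersetCard k V) (hWZ : bd W = link v Z) : IsCycleOn V k (antistar v Z ∆ W) where
  subset_powersetCard :=
    symmDiff_subset_of_subset (antistar_subset_powersetCard hZ.subset_powersetCard) hW
  bd_eq_empty := by rw [bd_symmDiff, bd_antistar hZ.bd_eq_empty, hWZ, symmDiff_eq_empty]

theorem exists_insert_link_ne_empty (hZ : IsCycleOn V (k + 1) Z) (hne : Z ≠ ∅) :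
    ∃ v V', v ∉ V' ∧ insert v V' = V ∧ link v Z ≠ ∅ := by
  obtain ⟨σ, hσ⟩ := nonempty_iff_ne_empty.2 hne
  obtain ⟨hσV, hσk⟩ := mem_powersetCard.1 (hZ.subset_powersetCard hσ)
  obtain ⟨v, hv⟩ : σ.Nonempty := card_pos.1 (by omega)
  refine ⟨v, V.erase v, notMem_erase v V, insert_erase (hσV hv),
    ne_empty_of_mem (a := σ.erase v) ?_⟩
  exact mem_link.2 ⟨notMem_erase v σ, by rwa [insert_erase hv]⟩

end Cycles

section FillingTrees

/-- A `d`-hypertree on `V`, described as a basis for the fillings of `(d-1)`-cycles instead of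
by maximality. -/
structure IsFillingTree (V : Finset ℕ) (d : ℕ) (T : Finset (Finset ℕ)) : Prop where
  subset_powersetCard : T ⊆ powersetCard (d + 1) V
  isAcyclic : IsAcyclic T
  exists_filling : ∀ Z, IsCycleOn V d Z → ∃ X ⊆ T, bd X = Z

variable {v d : ℕ} {V : Finset ℕ} {S T : Finset (Finset ℕ)}

theorem IsAcyclic.eq_empty (hT : IsAcyclic T) {Y : Finset (Finset ℕ)} (hY : Y ⊆ T)
    (hbd : bd Y = ∅) : Y = ∅ := by
  by_contra hne
  exact hT Y hY hne hbd

theorem IsFillingTree.isHypertreeOn (hT : IsFillingTree V d T) : IsHypertreeOn V d T := by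
  rw [IsHypertreeOn, simplices_eq_powersetCard]
  refine ⟨hT.subset_powersetCard, hT.isAcyclic, fun G hTG hG hGacyc => ?_⟩
  refine Subset.antisymm (fun σ hσ => ?_) hTG
  have hσG : {σ} ⊆ G := singleton_subset_iff.2 hσ
  obtain ⟨X, hXT, hX⟩ := hT.exists_filling _ (isCycleOn_bd (hσG.trans hG))
  have hXσ : X ∆ {σ} = ∅ :=
    hGacyc.eq_empty (symmDiff_subset_of_subset (hXT.trans hTG) hσG)
      (by rw [bd_symmDiff, hX, symmDiff_eq_empty])
  exact hXT (symmDiff_eq_empty.1 hXσ ▸ mem_singleton_self σ)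

theorem isFillingTree_star (hv : v ∉ V) :
    IsFillingTree (insert v V) d (cone v (powersetCard d V)) where
  subset_powersetCard := cone_subset_powersetCard hv Subset.rfl
  isAcyclic := by
    intro Y hY hne hbd
    have hanti : antistar v Y = ∅ := filter_eq_empty_iff.2 fun σ hσ => not_not.2
      ((mem_cone (avoids_of_subset_powersetCard hv Subset.rfl)).1 (hY hσ)).1
    rw [← bd_cone_antistar hbd v, hanti] at hne
    exact hne rfl
  exists_filling Z hZ :=
    ⟨cone v (antistar v Z),
      image_subset_image (antistar_subset_powersetCard hZ.subset_powersetCard),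
      bd_cone_antistar hZ.bd_eq_empty v⟩

theorem bd_cone_symmDiff_eq {A B Z : Finset (Finset ℕ)} (hA : Avoids v A)
    (hAZ : bd A = link v Z) (hBZ : bd B = antistar v Z ∆ A) : bd (cone v A ∆ B) = Z := by
  rw [bd_cone_symmDiff hA, hAZ, hBZ, symmDiff_comm (antistar v Z), symmDiff_symmDiff_cancel_left,
    cone_link_symmDiff_antistar]

theorem cone_symmDiff_subset_powersetCard {A B : Finset (Finset ℕ)} (hv : v ∉ V)
    (hA : A ⊆ powersetCard d V) (hB : B ⊆ powersetCard (d + 1) V) :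
    cone v A ∆ B ⊆ powersetCard (d + 1) (insert v V) :=
  symmDiff_subset_of_subset (cone_subset_powersetCard hv hA)
    (hB.trans (powersetCard_mono (subset_insert v V)))

theorem isAcyclic_cone_symmDiff (hTv : Avoids v T) (hSv : Avoids v S) (hT : IsAcyclic T)
    (hS : IsAcyclic S) : IsAcyclic (cone v T ∆ S) := by
  intro Y hY hne hbd
  have hlink : link v Y ⊆ T := by
    rw [← link_cone_symmDiff hTv hSv]
    exact image_subset_image (filter_subset_filter _ hY)
  have hanti : antistar v Y ⊆ S := by
    rw [← antistar_cone_symmDiff hTv hSv]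
    exact filter_subset_filter _ hY
  have hlink_empty : link v Y = ∅ := hT.eq_empty hlink (bd_link hbd v)
  have hanti_empty : antistar v Y = ∅ :=
    hS.eq_empty hanti ((bd_antistar hbd v).trans hlink_empty)
  rw [← bd_cone_antistar hbd v, hanti_empty] at hne
  exact hne rfl

theorem IsFillingTree.cone_symmDiff (hv : v ∉ V) (hT : IsFillingTree V d T)
    (hS : IsFillingTree V (d + 1) S) : IsFillingTree (insert v V) (d + 1) (cone v T ∆ S) where
  subset_powersetCard :=
    cone_symmDiff_subset_powersetCard hv hT.subset_powersetCard hS.subset_powersetCard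
  isAcyclic := isAcyclic_cone_symmDiff (avoids_of_subset_powersetCard hv hT.subset_powersetCard)
    (avoids_of_subset_powersetCard hv hS.subset_powersetCard) hT.isAcyclic hS.isAcyclic
  exists_filling Z hZ := by
    have hTv := avoids_of_subset_powersetCard hv hT.subset_powersetCard
    have hSv := avoids_of_subset_powersetCard hv hS.subset_powersetCard
    obtain ⟨A, hAT, hA⟩ := hT.exists_filling _ (isCycleOn_link hZ)
    obtain ⟨B, hBS, hB⟩ := hS.exists_filling _
      (isCycleOn_antistar_symmDiff hZ (hAT.trans hT.subset_powersetCard) hA)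
    have hAv : Avoids v A := fun σ hσ => hTv σ (hAT hσ)
    refine ⟨cone v A ∆ B, fun τ hτ => ?_, bd_cone_symmDiff_eq hAv hA hB⟩
    have hSτ := hSv τ
    rw [mem_symmDiff, mem_cone hAv] at hτ
    rw [mem_symmDiff, mem_cone hTv]
    have hAT' := @hAT (τ.erase v)
    have hBS' := @hBS τ
    tauto

end FillingTrees

section NearFillings

/-- The fillings of the `(d-1)`-cycle `Z` on `V` that differ from some `d`-hypertree on `V` in at
most `k` simplices. -/
def nearFillings (V : Finset ℕ) (d k : ℕ) (Z : Finset (Finset ℕ)) : Set (Finset (Finset ℕ)) :=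
  {W | W ⊆ powersetCard (d + 1) V ∧ bd W = Z ∧ ∃ T, IsFillingTree V d T ∧ #(W ∆ T) ≤ k}

variable {v d k k' : ℕ} {V : Finset ℕ} {W W' Z : Finset (Finset ℕ)}

theorem nearFillings_mono (hk : k ≤ k') : nearFillings V d k Z ⊆ nearFillings V d k' Z :=
  fun _ ⟨hW, hbd, T, hT, hWT⟩ => ⟨hW, hbd, T, hT, hWT.trans hk⟩

theorem cone_symmDiff_mem_nearFillings (hv : v ∉ V) (hW : W ∈ nearFillings V d k (link v Z))
    (hW' : W' ∈ nearFillings V (d + 1) k' (antistar v Z ∆ W)) :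
    cone v W ∆ W' ∈ nearFillings (insert v V) (d + 1) (k + k') Z := by
  obtain ⟨hWV, hbd, T, hT, hWT⟩ := hW
  obtain ⟨hWV', hbd', S, hS, hWS⟩ := hW'
  have hWv := avoids_of_subset_powersetCard hv hWV
  have hTv := avoids_of_subset_powersetCard hv hT.subset_powersetCard
  refine ⟨cone_symmDiff_subset_powersetCard hv hWV hWV', bd_cone_symmDiff_eq hWv hbd hbd',
    cone v T ∆ S, hT.cone_symmDiff hv hS, ?_⟩
  calc #((cone v W ∆ W') ∆ (cone v T ∆ S))
      = #(cone v (W ∆ T) ∆ (W' ∆ S)) := by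
        rw [cone_symmDiff hWv hTv, symmDiff_symmDiff_symmDiff_comm]
    _ ≤ #(cone v (W ∆ T)) + #(W' ∆ S) := card_symmDiff_le _ _
    _ ≤ k + k' := add_le_add (card_image_le.trans hWT) hWS

theorem cone_antistar_mem_nearFillings (hv : v ∉ V) (hZ : IsCycleOn (insert v V) d Z) :
    cone v (antistar v Z) ∈ nearFillings (insert v V) d #(powersetCard d V \ antistar v Z) Z := by
  have hanti : antistar v Z ⊆ powersetCard d V :=
    antistar_subset_powersetCard hZ.subset_powersetCard
  refine ⟨cone_subset_powersetCard hv hanti, bd_cone_antistar hZ.bd_eq_empty v, _,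
    isFillingTree_star hv, ?_⟩
  rw [← cone_symmDiff (avoids_antistar v Z) (avoids_of_subset_powersetCard hv Subset.rfl),
    symmDiff_of_le hanti]
  exact card_image_le

theorem nearFillings_one_nonempty (hV : #V = d + 1) (hZ : IsCycleOn V d Z) :
    (nearFillings V d 1 Z).Nonempty := by
  obtain ⟨v, V, hv, rfl, hVd⟩ := card_eq_succ.1 hV
  refine ⟨_, nearFillings_mono ?_ (cone_antistar_mem_nearFillings hv hZ)⟩
  exact (card_le_card sdiff_subset).trans (by simp [hVd])

theorem nearFillings_zero_nonempty (hV : #V = d + 1) (hZ : IsCycleOn V d Z) (hne : Z ≠ ∅) :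
    (nearFillings V d 0 Z).Nonempty := by
  obtain ⟨v, V, hv, rfl, rfl⟩ := card_eq_succ.1 hV
  have hanti := antistar_subset_powersetCard hZ.subset_powersetCard
  rw [powersetCard_self] at hanti
  have hanti_ne : antistar v Z ≠ ∅ := by
    intro h
    rw [← bd_cone_antistar hZ.bd_eq_empty v, h] at hne
    exact hne rfl
  refine ⟨_, nearFillings_mono ?_ (cone_antistar_mem_nearFillings hv hZ)⟩
  simp [(subset_singleton_iff.1 hanti).resolve_left hanti_ne]

theorem singleton_singleton_mem_nearFillings {w : ℕ} (hw : w ∈ V) (hZ : IsCycleOn V 0 Z)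
    (hne : Z ≠ ∅) : {{w}} ∈ nearFillings V 0 0 Z := by
  obtain rfl : Z = {∅} :=
    (subset_singleton_iff.1 (powersetCard_zero V ▸ hZ.subset_powersetCard)).resolve_left hne
  rw [← insert_erase hw] at hZ ⊢
  have hstar := cone_antistar_mem_nearFillings (notMem_erase w V) hZ
  have hanti : antistar w {∅} = {∅} := by simp [antistar]
  simpa [hanti, cone_singleton] using hstar

theorem bd_singleton_mem_nearFillings (hV : #V = d + 2) : bd {V} ∈ nearFillings V d 1 ∅ := by
  obtain ⟨v, V, hv, rfl, hVd⟩ := card_eq_succ.1 hV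
  refine ⟨(bd_singleton hV).le, bd_bd _, _, isFillingTree_star hv, ?_⟩
  simp [bd_singleton_insert hv, bd_singleton hVd]

end NearFillings

section GoodFillings

/-- The bound `C(n-1, d-2)` on the number of simplices in which the fillings constructed below
differ from a `d`-hypertree on `n` vertices, with value `0` for `n = 0` or `d < 2`. -/
def distBound : ℕ → ℕ → ℕ
  | n + 1, d + 2 => n.choose d
  | _, _ => 0

/-- The fillings of `Z` on `V` that are within `distBound` of a `d`-hypertree. -/
def goodFillings (V : Finset ℕ) (d : ℕ) (Z : Finset (Finset ℕ)) : Set (Finset (Finset ℕ)) :=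
  nearFillings V d (distBound #V d) Z

variable {v d : ℕ} {V : Finset ℕ} {W W' Z : Finset (Finset ℕ)}

theorem distBound_succ (n d : ℕ) :
    distBound (n + 1) d = if 2 ≤ d then n.choose (d - 2) else 0 := by
  match d with
  | 0 | 1 => rfl
  | d + 2 => simp [distBound]

theorem distBound_add_le (n d : ℕ) :
    distBound n d + distBound n (d + 1) ≤ distBound (n + 1) (d + 1) := by
  match n, d with
  | 0, 0 | 0, 1 | 0, d + 2 | n + 1, 0 => simp [distBound]
  | n + 1, 1 => simp [distBound]
  | n + 1, d + 2 => exact (Nat.choose_succ_succ n d).ge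

theorem isCycleOn_residual (hZ : IsCycleOn (insert v V) (d + 1) Z)
    (hW : W ∈ goodFillings V d (link v Z)) : IsCycleOn V (d + 1) (antistar v Z ∆ W) :=
  isCycleOn_antistar_symmDiff hZ hW.1 hW.2.1

theorem cone_symmDiff_mem_goodFillings (hv : v ∉ V) (hW : W ∈ goodFillings V d (link v Z))
    (hW' : W' ∈ goodFillings V (d + 1) (antistar v Z ∆ W)) :
    cone v W ∆ W' ∈ goodFillings (insert v V) (d + 1) Z := by
  rw [goodFillings, card_insert_of_notMem hv]
  exact nearFillings_mono (distBound_add_le _ _) (cone_symmDiff_mem_nearFillings hv hW hW')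

theorem avoids_of_mem_goodFillings (hv : v ∉ V) (hW : W ∈ goodFillings V d Z) : Avoids v W :=
  avoids_of_subset_powersetCard hv hW.1

theorem goodFillings_nontrivial_of_link (hv : v ∉ V) {S : Set (Finset (Finset ℕ))}
    (hS : S.Nontrivial) (hlink : S ⊆ goodFillings V d (link v Z))
    (hres : ∀ W ∈ S, (goodFillings V (d + 1) (antistar v Z ∆ W)).Nonempty) :
    (goodFillings (insert v V) (d + 1) Z).Nontrivial := by
  obtain ⟨W₁, hW₁, W₂, hW₂, hne⟩ := hS
  obtain ⟨W₁', hW₁'⟩ := hres W₁ hW₁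
  obtain ⟨W₂', hW₂'⟩ := hres W₂ hW₂
  refine ⟨_, cone_symmDiff_mem_goodFillings hv (hlink hW₁) hW₁',
    _, cone_symmDiff_mem_goodFillings hv (hlink hW₂) hW₂', fun heq => hne ?_⟩
  have link_eq {W W'} (hW : W ∈ S) (hW' : W' ∈ goodFillings V (d + 1) (antistar v Z ∆ W)) :
      link v (cone v W ∆ W') = W :=
    link_cone_symmDiff (avoids_of_mem_goodFillings hv (hlink hW))
      (avoids_of_mem_goodFillings hv hW')
  rw [← link_eq hW₁ hW₁', heq, link_eq hW₂ hW₂']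

theorem goodFillings_nontrivial_of_residual (hv : v ∉ V) (hW : W ∈ goodFillings V d (link v Z))
    (hres : (goodFillings V (d + 1) (antistar v Z ∆ W)).Nontrivial) :
    (goodFillings (insert v V) (d + 1) Z).Nontrivial := by
  obtain ⟨W₁, hW₁, W₂, hW₂, hne⟩ := hres
  refine ⟨_, cone_symmDiff_mem_goodFillings hv hW hW₁,
    _, cone_symmDiff_mem_goodFillings hv hW hW₂, fun heq => hne ?_⟩
  exact symmDiff_right_injective _ heq

theorem goodFillings_nonempty_of_card_eq_add_one (hV : #V = d + 1) (hZ : IsCycleOn V d Z)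
    (hne : Z ≠ ∅) : (goodFillings V d Z).Nonempty :=
  (nearFillings_zero_nonempty hV hZ hne).mono (nearFillings_mono (Nat.zero_le _))

/-- The `0`-hypertrees on `V`: each consists of a single vertex. -/
def pointTrees (V : Finset ℕ) : Finset (Finset (Finset ℕ)) := V.image fun w => {{w}}

theorem card_pointTrees (V : Finset ℕ) : #(pointTrees V) = #V :=
  card_image_of_injective V (singleton_injective.comp singleton_injective)

theorem mem_goodFillings_of_mem_pointTrees (hW : W ∈ pointTrees V) (hZ : IsCycleOn V 0 Z)
    (hne : Z ≠ ∅) : W ∈ goodFillings V 0 Z := by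
  obtain ⟨w, hw, rfl⟩ := mem_image.1 hW
  exact nearFillings_mono (Nat.zero_le _) (singleton_singleton_mem_nearFillings hw hZ hne)

theorem goodFillings_one_nonempty (hV : 2 ≤ #V) (hZ : IsCycleOn V 1 Z) (hne : Z ≠ ∅) :
    (goodFillings V 1 Z).Nonempty := by
  induction V using Finset.strongInduction generalizing Z with | H V ih
  obtain ⟨v, V, hv, rfl, hlink⟩ := exists_insert_link_ne_empty hZ hne
  have hcard := card_insert_of_notMem hv
  obtain hV₁ | hV₂ : #V = 1 ∨ 2 ≤ #V := by omega
  · exact goodFillings_nonempty_of_card_eq_add_one (by omega) hZ hne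
  · obtain ⟨W, hWV, hWne⟩ :=
      exists_mem_ne (by rwa [card_pointTrees] : 1 < #(pointTrees V)) (antistar v Z)
    have hW := mem_goodFillings_of_mem_pointTrees hWV (isCycleOn_link hZ) hlink
    obtain ⟨W', hW'⟩ := ih V (ssubset_insert hv) hV₂ (isCycleOn_residual hZ hW)
      (mt symmDiff_eq_empty.1 hWne.symm)
    exact ⟨_, cone_symmDiff_mem_goodFillings hv hW hW'⟩

theorem goodFillings_one_nontrivial (hV : 4 ≤ #V) (hZ : IsCycleOn V 1 Z) (hne : Z ≠ ∅) :
    (goodFillings V 1 Z).Nontrivial := by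
  obtain ⟨v, V, hv, rfl, hlink⟩ := exists_insert_link_ne_empty hZ hne
  rw [card_insert_of_notMem hv] at hV
  have hcard : 1 < #((pointTrees V).erase (antistar v Z)) := by
    have hle := pred_card_le_card_erase (s := pointTrees V) (a := antistar v Z)
    rw [card_pointTrees] at hle
    omega
  have hgood : ∀ W ∈ (pointTrees V).erase (antistar v Z), W ∈ goodFillings V 0 (link v Z) :=
    fun W hW => mem_goodFillings_of_mem_pointTrees (mem_of_mem_erase hW) (isCycleOn_link hZ) hlink
  refine goodFillings_nontrivial_of_link hv (one_lt_card_iff_nontrivial.1 hcard) hgood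
    fun W hW => goodFillings_one_nonempty (by omega) (isCycleOn_residual hZ (hgood W hW)) ?_
  exact mt symmDiff_eq_empty.1 (ne_of_mem_erase hW).symm

theorem goodFillings_add_two_nonempty_of_card_eq_add_three (hV : #V = d + 3)
    (hZ : IsCycleOn V (d + 2) Z) : (goodFillings V (d + 2) Z).Nonempty := by
  refine (nearFillings_one_nonempty hV hZ).mono (nearFillings_mono ?_)
  rw [hV]
  exact Nat.choose_pos (by omega)

/- The empty cycle has to be covered because the residual cycle may vanish. On `d + 5` vertices it
has no such filling for `d = 0`: a hypertree has six triangles and a cycle an even number of them,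
so at distance at most one they would coincide. -/
theorem goodFillings_add_two_nonempty_of_card_eq_add_four (hV : #V = d + 4)
    (hZ : IsCycleOn V (d + 2) Z) : (goodFillings V (d + 2) Z).Nonempty := by
  induction d generalizing V Z with
  | zero =>
    by_cases hne : Z = ∅
    · subst hne
      exact ⟨_, nearFillings_mono (by simp [hV, distBound]) (bd_singleton_mem_nearFillings hV)⟩
    obtain ⟨v, V, hv, rfl, hlink⟩ := exists_insert_link_ne_empty hZ hne
    rw [card_insert_of_notMem hv] at hV
    obtain ⟨W, hW⟩ := goodFillings_one_nonempty (by omega) (isCycleOn_link hZ) hlink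
    obtain ⟨W', hW'⟩ := goodFillings_add_two_nonempty_of_card_eq_add_three (d := 0) (by omega)
      (isCycleOn_residual hZ hW)
    exact ⟨_, cone_symmDiff_mem_goodFillings hv hW hW'⟩
  | succ d ih =>
    obtain ⟨v, V, hv, rfl, hVd⟩ := card_eq_succ.1 hV
    obtain ⟨W, hW⟩ := ih (by omega) (isCycleOn_link hZ)
    obtain ⟨W', hW'⟩ := goodFillings_add_two_nonempty_of_card_eq_add_three (by omega)
      (isCycleOn_residual hZ hW)
    exact ⟨_, cone_symmDiff_mem_goodFillings hv hW hW'⟩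

theorem goodFillings_nontrivial (hV : d + 4 ≤ #V) (hZ : IsCycleOn V (d + 1) Z) (hne : Z ≠ ∅) :
    (goodFillings V (d + 1) Z).Nontrivial := by
  induction V using Finset.strongInduction generalizing d Z with | H V ih
  cases d with
  | zero => exact goodFillings_one_nontrivial hV hZ hne
  | succ d =>
    obtain ⟨v, V, hv, rfl, hlink⟩ := exists_insert_link_ne_empty hZ hne
    rw [card_insert_of_notMem hv] at hV
    have hW_nontrivial := ih V (ssubset_insert hv) (by omega) (isCycleOn_link hZ) hlink
    obtain hVd | hVd : #V = d + 4 ∨ d + 1 + 4 ≤ #V := by omega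
    · exact goodFillings_nontrivial_of_link hv hW_nontrivial Set.Subset.rfl fun W hW =>
        goodFillings_add_two_nonempty_of_card_eq_add_four hVd (isCycleOn_residual hZ hW)
    · obtain ⟨W, hW, hWne⟩ := hW_nontrivial.exists_ne (antistar v Z)
      exact goodFillings_nontrivial_of_residual hv hW <| ih V (ssubset_insert hv) hVd
        (isCycleOn_residual hZ hW) (mt symmDiff_eq_empty.1 hWne.symm)

theorem goodFillings_nonempty (hV : d + 2 ≤ #V) (hZ : IsCycleOn V (d + 1) Z) (hne : Z ≠ ∅) :
    (goodFillings V (d + 1) Z).Nonempty := by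
  obtain hVd | hVd | hVd : #V = d + 2 ∨ #V = d + 3 ∨ d + 4 ≤ #V := by omega
  · exact goodFillings_nonempty_of_card_eq_add_one hVd hZ hne
  · cases d with
    | zero => exact goodFillings_one_nonempty (by omega) hZ hne
    | succ d => exact goodFillings_add_two_nonempty_of_card_eq_add_four hVd hZ
  · exact (goodFillings_nontrivial hVd hZ hne).nonempty

theorem exists_card_symmDiff_bd_le {k : ℕ} (h : (nearFillings V d k Z).Nonempty) :
    ∃ T, IsFillingTree V d T ∧ #(Z ∆ bd T) ≤ (d + 1) * k := by
  obtain ⟨W, hWV, rfl, T, hT, hWT⟩ := h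
  have hsub : W ∆ T ⊆ powersetCard (d + 1) V :=
    symmDiff_subset_of_subset hWV hT.subset_powersetCard
  refine ⟨T, hT, ?_⟩
  rw [← bd_symmDiff]
  exact (card_bd_le fun σ hσ => (mem_powersetCard.1 (hsub hσ)).2).trans
    (Nat.mul_le_mul_left _ hWT)

end GoodFillings

/-- For `d ≥ 1`, `n ≥ d+1` and every nontrivial `(d-1)`-cycle `Z` on `[n]` over `F_2`,
there is a `(d-1)`-cycle `Z'` on `[n]` which is the boundary of a `d`-hypertree on `[n]`
and satisfies `|Z ⊕ Z'| ≤ (d+1)·C(n-1,d-2)` (with `C(m,k) = 0` for `k < 0`). -/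
theorem exists_nearby_hypertree_boundary (d n : ℕ) (hd : 1 ≤ d) (hn : d + 1 ≤ n)
    (Z : Finset (Finset ℕ)) (hZ : Z ⊆ simplices (rng n) (d - 1))
    (hZcyc : bd Z = ∅) (hZne : Z ≠ ∅) :
    ∃ Z', Z' ⊆ simplices (rng n) (d - 1) ∧ bd Z' = ∅ ∧
      (∃ T, IsHypertreeOn (rng n) d T ∧ bd T = Z') ∧
      (Z ∆ Z').card ≤ (d + 1) * (if 2 ≤ d then (n - 1).choose (d - 2) else 0) := by
  obtain ⟨d, rfl⟩ := Nat.exists_eq_add_of_le' hd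
  have hcard : #(rng n) = n := by simp [rng]
  rw [Nat.add_sub_cancel, simplices_eq_powersetCard] at hZ ⊢
  have hfill := goodFillings_nonempty (by omega) ⟨hZ, hZcyc⟩ hZne
  obtain ⟨T, hT, hZT⟩ := exists_card_symmDiff_bd_le hfill
  refine ⟨bd T, bd_subset_powersetCard hT.subset_powersetCard, bd_bd T,
    ⟨T, hT.isHypertreeOn, rfl⟩, ?_⟩
  obtain ⟨m, rfl⟩ : ∃ m, n = m + 1 := Nat.exists_eq_add_of_le' (by omega)
  rwa [hcard, distBound_succ] at hZT
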